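/- arXiv:2402.00872 — 3 statements merged into one kernel-verified Lean document; each statement's English description precedes it below -/
import Mathlib

section
/- (Hull–Dobell theorem) Let m ≥ 1 and let a, c be integers, and consider the affine map f(x) = a·x + c on the integers modulo m. The linear congruential generator X_{n+1} = f(X_n) has full period m for every seed X_0 — i.e., the first m iterates X_0, f(X_0), …, f^{m−1}(X_0) of any seed enumerate all m residues — if and only if the following three conditions hold: (1) c and m are coprime; (2) a − 1 is divisible by every prime factor of m; and (3) if 4 divides m, then 4 divides a − 1. -/
/-!
Write `S n = ∑ i < n, a ^ i`. The iterates are `f^[n] x = x + S n * ((a - 1) * x + c)`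
(`iterate_eq`), so everything reduces to the behaviour of `S n` modulo `m`.

Sufficiency: under the three conditions `(a - 1) * x + c` is a unit modulo `m`, and `m ∣ S n`
forces `m ∣ n`. The latter is checked one prime power at a time (`prime_pow_dvd_of_dvd_geom_sum`):
if `p ∣ a - 1` then `S n ≡ n` modulo `p`, so `p ∣ S n` gives `n = p * n'`; then
`S n = S p * ∑ i < n', (a ^ p) ^ i`, where `p` divides `S p` exactly once, and one descends from
`(a, n)` to `(a ^ p, n')`. Hence the first `m` iterates of any seed are distinct.

Necessity: full period descends to every divisor of `m`. Reaching `1` from `0` makes `c` a unit.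
If a prime `p ∣ m` does not divide `a - 1`, then `f` has a fixed point modulo `p`. If `4 ∣ m` and
`a ≡ 3` modulo `4`, then `S n` only takes the values `0` and `1` modulo `4`, so with `c` odd the
orbit of `0` misses `2`.
-/

open Finset in
theorem iterate_eq (m : ℕ) (a c X : ℤ) (n : ℕ) :
    (fun x : ZMod m => a * x + c)^[n] (X : ZMod m) =
      ((X + (∑ i ∈ range n, a ^ i) * ((a - 1) * X + c) : ℤ) : ZMod m) := by
  induction n with
  | zero => simp
  | succ n ih =>
    rw [Function.iterate_succ_apply', ih, geom_sum_succ]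
    push_cast
    ring

open Finset in
theorem geom_sum_dvd_sub {p a : ℤ} (h : p ∣ a - 1) (n : ℕ) :
    p ∣ (∑ i ∈ range n, a ^ i) - n := by
  have : (∑ i ∈ range n, a ^ i) - (n : ℤ) = ∑ i ∈ range n, (a ^ i - 1) := by simp
  rw [this]
  exact dvd_sum fun i _ => h.trans (sub_one_dvd_pow_sub_one a i)

open Finset in
theorem geom_sum_mul_exp (a : ℤ) (p n : ℕ) :
    ∑ i ∈ range (p * n), a ^ i =
      (∑ i ∈ range p, a ^ i) * ∑ i ∈ range n, (a ^ p) ^ i := by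
  induction n with
  | zero => simp
  | succ n ih =>
    rw [Nat.mul_succ, sum_range_add, ih, sum_range_succ, mul_add, ← pow_mul]
    simp only [pow_add, ← mul_sum]
    ring

open Finset in
/-- The prime `p` divides `1 + a + ⋯ + a ^ (p - 1)` exactly once. For `p = 2` this needs
`4 ∣ a - 1`, since `1 + a` is divisible by `4` when `a ≡ 3` modulo `4`. -/
theorem geom_sum_prime_eq {p : ℕ} (hp : p.Prime) {a : ℤ} (h : (p : ℤ) ∣ a - 1)
    (h4 : p = 2 → (4 : ℤ) ∣ a - 1) :
    ∃ t : ℤ, ∑ i ∈ range p, a ^ i = p * (1 + p * t) := by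
  rcases hp.eq_two_or_odd' with rfl | hodd
  · obtain ⟨k, hk⟩ := h4 rfl
    refine ⟨k, ?_⟩
    have : a = 4 * k + 1 := by linarith
    simp [sum_range_succ, this]
    ring
  · obtain ⟨b, hb⟩ := h
    obtain ⟨t, ht⟩ := odd_sq_dvd_geom_sum₂_sub (a := (1 : ℤ)) b hodd
    refine ⟨t, ?_⟩
    have ha : a = 1 + p * b := by linarith
    simp only [one_pow, mul_one, ← ha] at ht
    linear_combination ht

open Finset in
/-- The conditional hypotheses are those that the conditions on `m` give when `p ^ k ∣ m`:
`p ∣ a - 1` is needed once `1 ≤ k`, and `4 ∣ a - 1` only for `p = 2` and `2 ≤ k`. The induction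
runs over all `a`, since it replaces `a` by `a ^ p`. -/
theorem prime_pow_dvd_of_dvd_geom_sum {p : ℕ} (hp : p.Prime) (k : ℕ) :
    ∀ (a : ℤ) (n : ℕ), (0 < k → (p : ℤ) ∣ a - 1) → (2 ≤ k → p = 2 → (4 : ℤ) ∣ a - 1) →
      (p : ℤ) ^ k ∣ ∑ i ∈ range n, a ^ i → p ^ k ∣ n := by
  induction k with
  | zero => simp
  | succ k ih =>
    intro a n h1 h4 hd
    have h1 := h1 k.succ_pos
    have hpn : p ∣ n := by
      have := (dvd_pow_self (p : ℤ) k.succ_ne_zero).trans hd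
      exact_mod_cast (dvd_sub_right this).1 (geom_sum_dvd_sub h1 n)
    rcases Nat.eq_zero_or_pos k with rfl | hk
    · simpa using hpn
    obtain ⟨n, rfl⟩ := hpn
    have h4 := h4 (by omega)
    obtain ⟨t, ht⟩ := geom_sum_prime_eq hp h1 h4
    have hp0 : (p : ℤ) ≠ 0 := by exact_mod_cast hp.ne_zero
    rw [geom_sum_mul_exp, ht, pow_succ', mul_assoc, mul_dvd_mul_iff_left hp0] at hd
    have hcop : IsCoprime ((p : ℤ) ^ k) (1 + p * t) :=
      IsCoprime.pow_left ⟨-t, 1, by ring⟩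
    have hsub := sub_one_dvd_pow_sub_one a p
    rw [pow_succ']
    exact mul_dvd_mul_left p (ih (a ^ p) n (fun _ => h1.trans hsub)
      (fun _ h2 => (h4 h2).trans hsub) (hcop.dvd_of_dvd_mul_left hd))

open Finset in
theorem dvd_of_dvd_geom_sum {m : ℕ} {a : ℤ}
    (h2 : ∀ p : ℕ, p.Prime → (p : ℤ) ∣ (m : ℤ) → (p : ℤ) ∣ a - 1)
    (h3 : (4 : ℤ) ∣ (m : ℤ) → (4 : ℤ) ∣ a - 1) (n : ℕ)
    (hd : (m : ℤ) ∣ ∑ i ∈ range n, a ^ i) : m ∣ n := by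
  rw [Nat.dvd_iff_prime_pow_dvd_dvd]
  intro p k hp hk
  have hk' : (p : ℤ) ^ k ∣ (m : ℤ) := by exact_mod_cast hk
  refine prime_pow_dvd_of_dvd_geom_sum hp k a n
    (fun h => h2 p hp ((dvd_pow_self _ h.ne').trans hk')) ?_ (hk'.trans hd)
  rintro h rfl
  exact h3 (((pow_dvd_pow (2 : ℤ) h)).trans hk')

open Finset in
theorem full_period_of_conditions {m : ℕ} (hm : 1 ≤ m) {a c : ℤ}
    (h1 : Int.gcd c (m : ℤ) = 1)
    (h2 : ∀ p : ℕ, p.Prime → (p : ℤ) ∣ (m : ℤ) → (p : ℤ) ∣ a - 1)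
    (h3 : (4 : ℤ) ∣ (m : ℤ) → (4 : ℤ) ∣ a - 1) (x₀ y : ZMod m) :
    ∃ n : ℕ, n < m ∧ (fun x : ZMod m => a * x + c)^[n] x₀ = y := by
  have : NeZero m := ⟨by omega⟩
  obtain ⟨X, rfl⟩ := ZMod.intCast_surjective x₀
  -- Modulo each prime factor of `m`, `(a - 1) * X + c` is `c` and `a` is `1`.
  have hu : IsCoprime (m : ℤ) ((a - 1) * X + c) := by
    rw [Int.isCoprime_iff_gcd_eq_one]
    by_contra hne
    obtain ⟨p, hp, hpd⟩ := Nat.exists_prime_and_dvd hne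
    have hpm : (p : ℤ) ∣ m := (Int.natCast_dvd_natCast.2 hpd).trans (Int.gcd_dvd_left ..)
    have hpu : (p : ℤ) ∣ (a - 1) * X + c :=
      (Int.natCast_dvd_natCast.2 hpd).trans (Int.gcd_dvd_right ..)
    have hpc : (p : ℤ) ∣ c := (dvd_add_right ((h2 p hp hpm).mul_right X)).1 hpu
    have := Int.dvd_coe_gcd hpc hpm
    rw [h1] at this
    exact hp.one_lt.ne' (by exact_mod_cast Int.eq_one_of_dvd_one (by positivity) this)
  have ha : IsCoprime (m : ℤ) a := by
    rw [Int.isCoprime_iff_gcd_eq_one]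
    by_contra hne
    obtain ⟨p, hp, hpd⟩ := Nat.exists_prime_and_dvd hne
    have hpm : (p : ℤ) ∣ m := (Int.natCast_dvd_natCast.2 hpd).trans (Int.gcd_dvd_left ..)
    have hpa : (p : ℤ) ∣ a :=
      (Int.natCast_dvd_natCast.2 hpd).trans (Int.gcd_dvd_right ..)
    have : (p : ℤ) ∣ 1 := (dvd_sub_right hpa).1 (h2 p hp hpm)
    exact hp.one_lt.ne' (by exact_mod_cast Int.eq_one_of_dvd_one (by positivity) this)
  have key : ∀ i d : ℕ, i + d < m →
      (fun x : ZMod m => a * x + c)^[i] (X : ZMod m) =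
        (fun x : ZMod m => a * x + c)^[i + d] (X : ZMod m) → d = 0 := by
    intro i d hlt h
    rw [iterate_eq, iterate_eq, ZMod.intCast_eq_intCast_iff_dvd_sub, sum_range_add] at h
    simp only [pow_add, ← mul_sum] at h
    have h' : (m : ℤ) ∣ a ^ i * ((∑ j ∈ range d, a ^ j) * ((a - 1) * X + c)) := by
      convert h using 1
      ring
    have := hu.dvd_of_dvd_mul_right (ha.pow_right.dvd_of_dvd_mul_left h')
    exact Nat.eq_zero_of_dvd_of_lt (dvd_of_dvd_geom_sum h2 h3 d this) (by omega)
  have hinj : Function.Injective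
      (fun n : Fin m => (fun x : ZMod m => a * x + c)^[(n : ℕ)] (X : ZMod m)) := by
    intro i j h
    apply Fin.ext
    rcases le_total (i : ℕ) j with hij | hij
    · obtain ⟨d, hd⟩ := Nat.exists_eq_add_of_le hij
      have := key i d (hd ▸ j.isLt) (by rw [← hd]; exact h)
      omega
    · obtain ⟨d, hd⟩ := Nat.exists_eq_add_of_le hij
      have := key j d (hd ▸ i.isLt) (by rw [← hd]; exact h.symm)
      omega
  obtain ⟨n, hn⟩ := ((Fintype.bijective_iff_injective_and_card _).2
    ⟨hinj, by simp [ZMod.card]⟩).2 y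
  exact ⟨n, n.isLt, hn⟩

open Finset in
theorem conditions_of_full_period {m : ℕ} {a c : ℤ}
    (h : ∀ x₀ y : ZMod m, ∃ n : ℕ, n < m ∧ (fun x : ZMod m => a * x + c)^[n] x₀ = y) :
    Int.gcd c (m : ℤ) = 1 ∧
      (∀ p : ℕ, p.Prime → (p : ℤ) ∣ (m : ℤ) → (p : ℤ) ∣ (a - 1)) ∧
      ((4 : ℤ) ∣ (m : ℤ) → (4 : ℤ) ∣ (a - 1)) := by
  have H : ∀ X Y : ℤ, ∃ n : ℕ,
      (m : ℤ) ∣ Y - (X + (∑ i ∈ range n, a ^ i) * ((a - 1) * X + c)) := by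
    intro X Y
    obtain ⟨n, -, hn⟩ := h X Y
    rw [iterate_eq, ZMod.intCast_eq_intCast_iff_dvd_sub] at hn
    exact ⟨n, hn⟩
  have hc : IsCoprime c (m : ℤ) := by
    obtain ⟨n, t, ht⟩ := H 0 1
    exact ⟨∑ i ∈ range n, a ^ i, t, by linear_combination -ht⟩
  have hprime : ∀ p : ℕ, p.Prime → (p : ℤ) ∣ (m : ℤ) → (p : ℤ) ∣ (a - 1) := by
    intro p hp hpm
    by_contra hna
    obtain ⟨s, t, hst⟩ := (Nat.prime_iff_prime_int.1 hp).coprime_iff_not_dvd.2 hna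
    -- `-t * c` is a fixed point modulo `p`, where `t` inverts `a - 1`.
    obtain ⟨n, hn⟩ := H (-t * c) (-t * c + 1)
    have hfix : (p : ℤ) ∣ (a - 1) * (-t * c) + c := ⟨s * c, by linear_combination -c * hst⟩
    have hdiff := dvd_add (hpm.trans hn) (hfix.mul_left (∑ i ∈ range n, a ^ i))
    have : (p : ℤ) ∣ 1 := by
      ring_nf at hdiff
      exact hdiff
    exact hp.one_lt.ne' (by exact_mod_cast Int.eq_one_of_dvd_one (by positivity) this)
  refine ⟨Int.isCoprime_iff_gcd_eq_one.1 hc, hprime, fun h4 => ?_⟩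
  have hm2 : (2 : ℤ) ∣ m := (by norm_num : (2 : ℤ) ∣ 4).trans h4
  have ha2 : (2 : ℤ) ∣ a - 1 := by exact_mod_cast hprime 2 Nat.prime_two (by exact_mod_cast hm2)
  have hc2 : ¬ (2 : ℤ) ∣ c := fun hd => by
    have := hc.isUnit_of_dvd' hd hm2
    norm_num [Int.isUnit_iff] at this
  by_contra hna
  have hS : ∀ n : ℕ, (∑ i ∈ range n, a ^ i) % 4 = 0 ∨ (∑ i ∈ range n, a ^ i) % 4 = 1 := by
    intro n
    induction n with
    | zero => simp
    | succ n ih =>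
      have ha3 : a % 4 = 3 := by omega
      rw [geom_sum_succ]
      rcases ih with ih | ih <;> simp [Int.add_emod, Int.mul_emod, ha3, ih]
  obtain ⟨n, hn⟩ := H 0 2
  replace hn := h4.trans hn
  simp only [mul_zero, zero_add] at hn
  have hs := hS n
  generalize (∑ i ∈ range n, a ^ i) = s at hn hs
  obtain ⟨k, hk⟩ := hn
  rcases hs with hs | hs
  · obtain ⟨r, rfl⟩ := Int.dvd_of_emod_eq_zero hs
    rw [mul_assoc] at hk
    omega
  · obtain ⟨r, hr⟩ : ∃ r, s = 4 * r + 1 := ⟨s / 4, by omega⟩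
    rw [hr, add_mul, one_mul, mul_assoc] at hk
    omega

/-- **Hull–Dobell theorem.** For `m ≥ 1` and integers `a`, `c`, the LCG
`X_{n+1} = a * X_n + c` on `ZMod m` has full period `m` for every seed — the first `m`
iterates of any seed enumerate all `m` residues — if and only if:
(1) `c` and `m` are coprime; (2) `a - 1` is divisible by every prime factor of `m`;
and (3) if `4 ∣ m` then `4 ∣ a - 1`. -/
theorem hull_dobell (m : ℕ) (hm : 1 ≤ m) (a c : ℤ) :
    (∀ x₀ y : ZMod m, ∃ n : ℕ, n < m ∧ (fun x : ZMod m => a * x + c)^[n] x₀ = y) ↔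
      (Int.gcd c (m : ℤ) = 1 ∧
        (∀ p : ℕ, p.Prime → (p : ℤ) ∣ (m : ℤ) → (p : ℤ) ∣ (a - 1)) ∧
        ((4 : ℤ) ∣ (m : ℤ) → (4 : ℤ) ∣ (a - 1))) :=
  ⟨conditions_of_full_period, fun ⟨h1, h2, h3⟩ => full_period_of_conditions hm h1 h2 h3⟩
end

section
/- For every natural number m with 1 ≤ m ≤ 1503 and every natural number c, there exists k with 0 ≤ k ≤ 10 such that gcd(c + k, m) = 1; that is, the maximum coprime gap for moduli up to 1503 is at most 10, so incrementing the sender's charging cycle length by at most 10 slots always yields a cycle length coprime to the receiver's. -/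
/-!
The proof is a union bound. If `p` is coprime to `d`, then among the `N` terms `a + d * j`, `j < N`,
at most `(N - 1) / p + 1 = ⌈N / p⌉` are divisible by `p`; so as soon as these numbers sum to less
than `N` over the primes of a set `S`, some term avoids every prime of `S` (`exists_sieved`).

* If `m` is odd, then `3 * 5 * 7 * 11 * 11 > 1503` forces `m` to have at most four prime factors
  (`card_bound`). Apply the bound to `c, …, c + 10`: the primes `3`, `5`, `7` and one prime `≥ 11`
  rule out at most `4 + 3 + 2 + 1 = 10` of the `11` numbers, and this is the worst case.
* If `m` is even, then `2 * 3 * 5 * 7 * 11 > 1503` forces `m` to have at most three odd prime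
  factors. Apply the bound to the first five odd numbers that are at least `c`, all of which are at
  most `c + 9`: the prime `3` rules out at most two of them and any larger prime at most one, which
  makes at most `4` of the `5` numbers.
-/

/-- In an arithmetic progression of length `N` whose difference is coprime to `p`, at most `⌈N / p⌉`
terms are divisible by `p`: the indices of such terms are congruent mod `p`, hence determined by
their quotient by `p`. -/
lemma card_multiples_le (a d N p : ℕ) (hd : Nat.Coprime p d) :
    ((Finset.range N).filter (fun j => p ∣ a + d * j)).card ≤ (N - 1) / p + 1 := by
  rw [← Finset.card_range ((N - 1) / p + 1)]
  apply Finset.card_le_card_of_injOn (fun j => j / p)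
  · intro j hj
    simp only [Finset.coe_filter, Finset.mem_range, Set.mem_ofPred_eq] at hj
    simp only [Finset.coe_range, Set.mem_Iio]
    exact Nat.lt_succ_of_le (Nat.div_le_div_right (by omega))
  · intro i hi j hj hij
    simp only [Finset.coe_filter, Finset.mem_range, Set.mem_ofPred_eq] at hi hj
    have hmod : d * i ≡ d * j [MOD p] := Nat.ModEq.add_left_cancel' a
      (((Nat.modEq_zero_iff_dvd).2 hi.2).trans ((Nat.modEq_zero_iff_dvd).2 hj.2).symm)
    have hmod' : i % p = j % p := Nat.ModEq.cancel_left_of_coprime hd hmod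
    have hdiv : i / p = j / p := hij
    rw [← Nat.div_add_mod i p, ← Nat.div_add_mod j p, hdiv, hmod']

lemma exists_sieved (a d N : ℕ) (S : Finset ℕ) (hd : ∀ p ∈ S, Nat.Coprime p d)
    (hS : ∑ p ∈ S, ((N - 1) / p + 1) < N) :
    ∃ j < N, ∀ p ∈ S, ¬ p ∣ a + d * j := by
  by_contra! h
  have hcover : Finset.range N ⊆
      S.biUnion (fun p => (Finset.range N).filter (fun j => p ∣ a + d * j)) := by
    intro j hj
    obtain ⟨p, hp, hpj⟩ := h j (Finset.mem_range.1 hj)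
    exact Finset.mem_biUnion.2 ⟨p, hp, Finset.mem_filter.2 ⟨hj, hpj⟩⟩
  have h1 := (Finset.card_le_card hcover).trans Finset.card_biUnion_le
  have h2 := Finset.sum_le_sum (fun p hp => card_multiples_le a d N p (hd p hp))
  rw [Finset.card_range] at h1
  omega

/-- The product of a set of odd primes is at least `3 * 5 * 7 * 11 ^ (#S - 3)`, written without
subtraction or division: replacing `3`, `5`, `7` by `11` multiplies the product by at most
`11 ^ 3 / (3 * 5 * 7)`. -/
lemma card_bound (S : Finset ℕ) (hS : ∀ p ∈ S, p.Prime ∧ p ≠ 2) :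
    105 * 11 ^ S.card ≤ 1331 * ∏ p ∈ S, p := by
  have hsmall : S.filter (· < 11) ∈ ({3, 5, 7} : Finset ℕ).powerset := by
    rw [Finset.mem_powerset]
    intro p hp
    obtain ⟨hpS, hlt⟩ := Finset.mem_filter.1 hp
    obtain ⟨hprime, hne⟩ := hS p hpS
    interval_cases p <;> first | decide | exact absurd rfl hne | (revert hprime; norm_num)
  have h1 : ∀ U ∈ ({3, 5, 7} : Finset ℕ).powerset, 105 * 11 ^ U.card ≤ 1331 * ∏ p ∈ U, p := by
    decide
  have h2 : 11 ^ (S.filter (¬ · < 11)).card ≤ ∏ p ∈ S.filter (¬ · < 11), p :=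
    Finset.pow_card_le_prod _ _ _ (fun p hp => not_lt.1 (Finset.mem_filter.1 hp).2)
  rw [← Finset.prod_filter_mul_prod_filter_not S (· < 11),
    ← Finset.card_filter_add_card_filter_not (s := S) (· < 11), pow_add, ← mul_assoc, ← mul_assoc]
  exact Nat.mul_le_mul (h1 _ hsmall) h2

lemma card_le_of_prod_lt (S : Finset ℕ) (hS : ∀ p ∈ S, p.Prime ∧ p ≠ 2) (n : ℕ)
    (h : 1331 * ∏ p ∈ S, p < 105 * 11 ^ (n + 1)) : S.card ≤ n := by
  have h1 : 11 ^ S.card < 11 ^ (n + 1) :=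
    lt_of_mul_lt_mul_left ((card_bound S hS).trans_lt h) (Nat.zero_le 105)
  exact Nat.lt_succ_iff.1 ((Nat.pow_lt_pow_iff_right (by norm_num)).1 h1)

/-- For every modulus `1 ≤ m ≤ 1503` and every `c : ℕ`, some increment `k ≤ 10`
makes `c + k` coprime to `m`: the maximum coprime gap for moduli up to 1503 is
at most 10. -/
theorem coprime_gap_le_ten (m c : ℕ) (hm₁ : 1 ≤ m) (hm₂ : m ≤ 1503) :
    ∃ k : ℕ, k ≤ 10 ∧ Nat.Coprime (c + k) m := by
  have hm0 : m ≠ 0 := by omega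
  have hrad : ∏ p ∈ m.primeFactors, p ≤ m := Nat.le_of_dvd hm₁ (Nat.prod_primeFactors_dvd m)
  by_cases h2 : 2 ∣ m
  · have hmem : 2 ∈ m.primeFactors := Nat.mem_primeFactors.2 ⟨Nat.prime_two, h2, hm0⟩
    have hS : ∀ p ∈ m.primeFactors.erase 2, p.Prime ∧ p ≠ 2 := fun p hp =>
      ⟨Nat.prime_of_mem_primeFactors (Finset.mem_of_mem_erase hp), Finset.ne_of_mem_erase hp⟩
    have hcard : (m.primeFactors.erase 2).card ≤ 3 := by
      apply card_le_of_prod_lt _ hS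
      have := Finset.mul_prod_erase m.primeFactors (fun p => p) hmem
      norm_num at this ⊢
      omega
    have hsum : ∑ p ∈ m.primeFactors.erase 2, ((5 - 1) / p + 1) < 5 := by
      have hle : ∑ p ∈ m.primeFactors.erase 2, ((5 - 1) / p + 1) ≤
          ∑ p ∈ m.primeFactors.erase 2, ((if p = 3 then 1 else 0) + 1) := by
        refine Finset.sum_le_sum fun p hp => ?_
        obtain ⟨hprime, hne⟩ := hS p hp
        have := hprime.two_le
        rcases lt_or_ge p 5 with h | h
        · clear hp
          interval_cases p <;> first | decide | exact absurd rfl hne | (revert hprime; norm_num)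
        · simp [Nat.div_eq_of_lt (show 4 < p by omega)]
      refine hle.trans_lt ?_
      simp only [Finset.sum_add_distrib, Finset.sum_ite_eq', Finset.sum_const, smul_eq_mul]
      split_ifs <;> omega
    -- `c + (c + 1) % 2` is the first odd number that is at least `c`.
    obtain ⟨j, hj, hsieve⟩ := exists_sieved (c + (c + 1) % 2) 2 5 _
      (fun p hp => (Nat.coprime_primes (hS p hp).1 Nat.prime_two).2 (hS p hp).2) hsum
    refine ⟨(c + 1) % 2 + 2 * j, by omega, Nat.coprime_of_dvd fun p hp hpc hpm => ?_⟩
    rw [← add_assoc] at hpc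
    by_cases hp2 : p = 2
    · subst hp2
      omega
    · exact hsieve p (Finset.mem_erase.2 ⟨hp2, Nat.mem_primeFactors.2 ⟨hp, hpm, hm0⟩⟩) hpc
  · have hS : ∀ p ∈ m.primeFactors, p.Prime ∧ p ≠ 2 := fun p hp =>
      ⟨Nat.prime_of_mem_primeFactors hp, fun h => h2 (h ▸ Nat.dvd_of_mem_primeFactors hp)⟩
    have hcard : m.primeFactors.card ≤ 4 := by
      apply card_le_of_prod_lt _ hS
      norm_num
      omega
    have hsum : ∑ p ∈ m.primeFactors, ((11 - 1) / p + 1) < 11 := by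
      have hle : ∑ p ∈ m.primeFactors, ((11 - 1) / p + 1) ≤ ∑ p ∈ m.primeFactors,
          ((if p = 3 then 3 else 0) + (if p = 5 then 2 else 0) + (if p = 7 then 1 else 0) + 1) := by
        refine Finset.sum_le_sum fun p hp => ?_
        obtain ⟨hprime, hne⟩ := hS p hp
        have := hprime.two_le
        rcases lt_or_ge p 11 with h | h
        · clear hp
          interval_cases p <;> first | decide | exact absurd rfl hne | (revert hprime; norm_num)
        · simp [Nat.div_eq_of_lt (show 10 < p by omega)]
      refine hle.trans_lt ?_
      simp only [Finset.sum_add_distrib, Finset.sum_ite_eq', Finset.sum_const, smul_eq_mul]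
      split_ifs <;> omega
    obtain ⟨j, hj, hsieve⟩ := exists_sieved c 1 11 _ (fun p _ => Nat.coprime_one_right p) hsum
    refine ⟨j, by omega, Nat.coprime_of_dvd fun p hp hpc hpm => ?_⟩
    exact hsieve p (Nat.mem_primeFactors.2 ⟨hp, hpm, hm0⟩) (by rwa [one_mul])
end

section
/- (Reliability of Swift-sync) For all charging times t_s, t_r with t_s + 1 ≤ 1503 and t_r + 1 ≤ 1503, and for all initial offsets o_s and o_r, there exist an increment inc with 0 ≤ inc ≤ 10 and a natural number n with n < t_r + 1 such that o_s + n·(t_s + 1 + inc) ≡ o_r (mod t_r + 1); that is, the sender running Swift-sync with effective cycle length t_s + 1 + inc is guaranteed to align a working slot with the receiver within a fixed, bounded number of charging cycles. -/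
/-!
If `t_s + 1 + inc` is coprime to `M = t_r + 1`, it is invertible modulo `M`, so the congruence has
a solution `n < M`. It therefore suffices that any 11 consecutive integers contain one coprime to
`M`, for every `0 < M ≤ 1503` (`exists_coprime_window`).

Such a window contains five consecutive odd numbers `b, b + 2, …, b + 8`. If each of them shares a
prime with `M`, those primes are odd, and a prime can serve two of the five only if it is `3` and
the two are `b + 2 * i` and `b + 2 * (i + 3)`. The pairs `(b, b + 6)` and `(b + 2, b + 8)` cannot
both be served by `3`, so at least four distinct odd primes divide `M`. As `M ≤ 1503`, this leaves
only `M = 3 * 5 * 7 * 11` and `M = 3 * 5 * 7 * 13` (`eq_of_four_odd_primes`), for which the claim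
is verified over all residues.
-/

lemma le_mul_of_three_odd {x y z : ℕ} (hx : 3 ≤ x) (hy : 3 ≤ y) (hz : 3 ≤ z)
    (ox : x % 2 = 1) (oy : y % 2 = 1) (oz : z % 2 = 1)
    (hxy : x ≠ y) (hxz : x ≠ z) (hyz : y ≠ z) : 105 ≤ x * y * z := by
  have key : ∀ a b c : ℕ, 3 ≤ a → 5 ≤ b → 7 ≤ c → 105 ≤ a * b * c := fun a b c ha hb hc =>
    Nat.mul_le_mul (Nat.mul_le_mul ha hb) hc
  rcases lt_or_gt_of_ne hxy with h1 | h1 <;> rcases lt_or_gt_of_ne hxz with h2 | h2 <;>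
    rcases lt_or_gt_of_ne hyz with h3 | h3
  · exact key x y z (by omega) (by omega) (by omega)
  · exact (key x z y (by omega) (by omega) (by omega)).trans_eq (by ring)
  · omega
  · exact (key z x y (by omega) (by omega) (by omega)).trans_eq (by ring)
  · exact (key y x z (by omega) (by omega) (by omega)).trans_eq (by ring)
  · omega
  · exact (key y z x (by omega) (by omega) (by omega)).trans_eq (by ring)
  · exact (key z y x (by omega) (by omega) (by omega)).trans_eq (by ring)

/-- Each of the four primes is at most `14`, since the other three multiply to at least
`3 * 5 * 7`; so all lie in `{3, 5, 7, 11, 13}`. -/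
lemma eq_of_four_odd_primes {M p q r s : ℕ} (hM0 : 0 < M) (hM : M ≤ 1503)
    (hp : p.Prime) (hq : q.Prime) (hr : r.Prime) (hs : s.Prime)
    (op : p % 2 = 1) (oq : q % 2 = 1) (or' : r % 2 = 1) (os : s % 2 = 1)
    (dp : p ∣ M) (dq : q ∣ M) (dr : r ∣ M) (ds : s ∣ M)
    (hpq : p ≠ q) (hpr : p ≠ r) (hps : p ≠ s) (hqr : q ≠ r) (hqs : q ≠ s) (hrs : r ≠ s) :
    M = 1155 ∨ M = 1365 := by
  have cop : ∀ {x y : ℕ}, x.Prime → y.Prime → x ≠ y → x.Coprime y := fun hx hy h =>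
    (Nat.coprime_primes hx hy).2 h
  have three : ∀ {x : ℕ}, x.Prime → x % 2 = 1 → 3 ≤ x := fun hx ox => by
    have := hx.two_le; omega
  have hP : p * q * r * s ∣ M := by
    have h1 : p * q ∣ M := (cop hp hq hpq).mul_dvd_of_dvd_of_dvd dp dq
    have h2 : p * q * r ∣ M :=
      (Nat.Coprime.mul_left (cop hp hr hpr) (cop hq hr hqr)).mul_dvd_of_dvd_of_dvd h1 dr
    exact (Nat.Coprime.mul_left (Nat.Coprime.mul_left (cop hp hs hps) (cop hq hs hqs))
      (cop hr hs hrs)).mul_dvd_of_dvd_of_dvd h2 ds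
  have hle : p * q * r * s ≤ 1503 := (Nat.le_of_dvd hM0 hP).trans hM
  have tp := three hp op
  have tq := three hq oq
  have tr := three hr or'
  have ts := three hs os
  have bound : ∀ {x y : ℕ}, 105 ≤ y → y * x ≤ 1503 → x ≤ 14 := fun hy h => by
    nlinarith
  have bs := bound (le_mul_of_three_odd tp tq tr op oq or' hpq hpr hqr) hle
  have br := bound (le_mul_of_three_odd tp tq ts op oq os hpq hps hqs)
    ((mul_right_comm (p * q) s r).trans_le hle)
  have bq : q ≤ 14 := bound (le_mul_of_three_odd tp tr ts op or' os hpr hps hrs)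
    (le_of_eq_of_le (by ring) hle)
  have bp : p ≤ 14 := bound (le_mul_of_three_odd tq tr ts oq or' os hqr hqs hrs)
    (le_of_eq_of_le (by ring) hle)
  have mem : ∀ x ≤ 14, x.Prime → x % 2 = 1 → x ∈ [3, 5, 7, 11, 13] := by
    intro x hx px ox
    interval_cases x <;> first | omega | decide | exact absurd px (by norm_num)
  have fin : ∀ p ∈ [3, 5, 7, 11, 13], ∀ q ∈ [3, 5, 7, 11, 13], ∀ r ∈ [3, 5, 7, 11, 13],
      ∀ s ∈ [3, 5, 7, 11, 13], p ≠ q → p ≠ r → p ≠ s → q ≠ r → q ≠ s → r ≠ s →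
      p * q * r * s ≤ 1503 → p * q * r * s = 1155 ∨ p * q * r * s = 1365 := by
    decide +kernel
  have hv := fin p (mem p bp hp op) q (mem q bq hq oq) r (mem r br hr or') s (mem s bs hs os)
    hpq hpr hps hqr hqs hrs hle
  obtain ⟨k, hk⟩ := hP
  rcases hv with h | h <;> rw [h] at hk <;> omega

/-- The two moduli with four odd prime factors. Five odd numbers do not suffice for these, so
the whole window is used. -/
lemma exists_coprime_of_eq {M : ℕ} (hM : M = 1155 ∨ M = 1365) (a : ℕ) :
    ∃ i ≤ 10, (a + i).Coprime M := by
  have h1 : ∀ a < 1155, ∃ i < 11, Nat.gcd (a + i) 1155 = 1 := by decide +kernel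
  have h2 : ∀ a < 1365, ∃ i < 11, Nat.gcd (a + i) 1365 = 1 := by decide +kernel
  have red : ∀ i, Nat.gcd (a % M + i) M = Nat.gcd (a + i) M := fun i =>
    ((Nat.mod_modEq a M).add_right i).gcd_eq
  rcases hM with rfl | rfl
  · obtain ⟨i, hi, h⟩ := h1 (a % 1155) (Nat.mod_lt _ (by norm_num))
    exact ⟨i, by omega, (red i).symm.trans h⟩
  · obtain ⟨i, hi, h⟩ := h2 (a % 1365) (Nat.mod_lt _ (by norm_num))
    exact ⟨i, by omega, (red i).symm.trans h⟩

/-- A prime dividing two of five consecutive odd numbers is `3`, and the two are three places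
apart: it is odd and divides twice the distance of their positions. -/
lemma eq_three_of_dvd {b p i j : ℕ} (hp : p.Prime) (hb : b % 2 = 1) (hij : i < j) (hj : j ≤ 4)
    (hi' : p ∣ b + 2 * i) (hj' : p ∣ b + 2 * j) : p = 3 ∧ j = i + 3 := by
  have hd : p ∣ 2 * (j - i) := by
    have := Nat.dvd_sub hj' hi'
    rwa [show b + 2 * j - (b + 2 * i) = 2 * (j - i) by omega] at this
  have hp2 : p ≠ 2 := by rintro rfl; omega
  have hd' : p ∣ j - i := ((Nat.coprime_primes hp Nat.prime_two).2 hp2).dvd_of_dvd_mul_left hd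
  have hle := Nat.le_of_dvd (by omega) hd'
  have h2 := hp.two_le
  have h4 : p ≠ 4 := by rintro rfl; norm_num at hp
  obtain rfl : p = 3 := by omega
  exact ⟨rfl, by omega⟩

/-- Five consecutive odd numbers contain one coprime to `M`, apart from the two exceptional
moduli. -/
lemma exists_coprime_odd {M b : ℕ} (hM0 : 0 < M) (hM : M ≤ 1503) (hb : b % 2 = 1)
    (hne : ¬ (M = 1155 ∨ M = 1365)) : ∃ i ≤ 4, (b + 2 * i).Coprime M := by
  by_contra! hcon
  have hex : ∀ i, ∃ p, i ≤ 4 → p.Prime ∧ p ∣ b + 2 * i ∧ p ∣ M := fun i => by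
    by_cases hi : i ≤ 4
    · obtain ⟨p, h⟩ := Nat.Prime.not_coprime_iff_dvd.1 (hcon i hi)
      exact ⟨p, fun _ => h⟩
    · exact ⟨0, fun h => absurd h hi⟩
  choose f hf using hex
  have odd : ∀ i ≤ 4, f i % 2 = 1 := fun i hi => by
    rcases (hf i hi).1.eq_two_or_odd with h | h
    · have := (hf i hi).2.1
      rw [h] at this
      omega
    · exact h
  have eq3 : ∀ i j, i < j → j ≤ 4 → f i = f j → f i = 3 ∧ j = i + 3 := fun i j hij hj h =>
    eq_three_of_dvd (hf i (by omega)).1 hb hij hj (hf i (by omega)).2.1 (h ▸ (hf j hj).2.1)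
  have ne : ∀ i j, i < j → j ≤ 4 → j ≠ i + 3 → f i ≠ f j := fun i j hij hj h h' =>
    h (eq3 i j hij hj h').2
  have four : ∀ i j k l, i ≤ 4 → j ≤ 4 → k ≤ 4 → l ≤ 4 → f i ≠ f j → f i ≠ f k → f i ≠ f l →
      f j ≠ f k → f j ≠ f l → f k ≠ f l → False := fun i j k l hi hj hk hl h1 h2 h3 h4 h5 h6 =>
    hne (eq_of_four_odd_primes hM0 hM (hf i hi).1 (hf j hj).1 (hf k hk).1 (hf l hl).1
      (odd i hi) (odd j hj) (odd k hk) (odd l hl) (hf i hi).2.2 (hf j hj).2.2 (hf k hk).2.2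
      (hf l hl).2.2 h1 h2 h3 h4 h5 h6)
  have n01 := ne 0 1 (by omega) (by omega) (by omega)
  have n02 := ne 0 2 (by omega) (by omega) (by omega)
  have n12 := ne 1 2 (by omega) (by omega) (by omega)
  by_cases h14 : f 1 = f 4
  · -- `3` divides `b + 2`, hence not `b`, so the primes at positions `0` and `3` differ.
    have h03 : f 0 ≠ f 3 := fun h =>
      n01 ((eq3 0 3 (by omega) (by omega) h).1.trans (eq3 1 4 (by omega) (by omega) h14).1.symm)
    exact four 0 1 2 3 (by omega) (by omega) (by omega) (by omega) n01 n02 h03 n12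
      (ne 1 3 (by omega) (by omega) (by omega)) (ne 2 3 (by omega) (by omega) (by omega))
  · exact four 0 1 2 4 (by omega) (by omega) (by omega) (by omega) n01 n02
      (ne 0 4 (by omega) (by omega) (by omega)) n12 h14 (ne 2 4 (by omega) (by omega) (by omega))

lemma exists_coprime_window {M : ℕ} (hM0 : 0 < M) (hM : M ≤ 1503) (a : ℕ) :
    ∃ i ≤ 10, (a + i).Coprime M := by
  by_cases hne : M = 1155 ∨ M = 1365
  · exact exists_coprime_of_eq hne a
  -- `a + (a + 1) % 2` is the first odd number of the window.
  obtain ⟨i, hi, h⟩ := exists_coprime_odd (b := a + (a + 1) % 2) hM0 hM (by omega) hne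
  exact ⟨(a + 1) % 2 + 2 * i, by omega, by rwa [← add_assoc]⟩

/-- **Reliability of Swift-sync.** For charging times `t_s`, `t_r` with cycle lengths
at most 1503 slots and arbitrary initial offsets, there are an increment `inc ≤ 10`
and an `n < t_r + 1` with `o_s + n * (t_s + 1 + inc) ≡ o_r [MOD t_r + 1]`: the sender
is guaranteed to align a working slot with the receiver within a bounded number of
charging cycles. -/
theorem swift_sync_reliability
    (t_s t_r o_s o_r : ℕ) (hs : t_s + 1 ≤ 1503) (hr : t_r + 1 ≤ 1503) :
    ∃ inc : ℕ, inc ≤ 10 ∧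
      ∃ n : ℕ, n < t_r + 1 ∧ o_s + n * (t_s + 1 + inc) ≡ o_r [MOD t_r + 1] := by
  obtain ⟨inc, hinc, hc⟩ := exists_coprime_window (Nat.succ_pos t_r) hr (t_s + 1)
  refine ⟨inc, hinc, (((o_r : ZMod (t_r + 1)) - o_s) *
    ((t_s + 1 + inc : ℕ) : ZMod (t_r + 1))⁻¹).val, ZMod.val_lt _, ?_⟩
  rw [← ZMod.natCast_eq_natCast_iff, Nat.cast_add, Nat.cast_mul, ZMod.natCast_zmod_val,
    mul_assoc, mul_comm _⁻¹, ZMod.coe_mul_inv_eq_one _ hc, mul_one, add_sub_cancel]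
end
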